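/- For all odd integers n ≥ 1, C_{2,3}(n) = (1/n) · ∑_{i=0}^{⌊(n−1)/8⌋} multinomial(3((n−1)/2 − i); n−1, (n−1)/2 − 4i, i) · (−1)^i · 2^{(n−1)/2 − 4i}, where multinomial(m; a,b,c) = m!/(a!·b!·c!) for m = a+b+c; and C_{2,3}(n) = 0 for all even n. -/

import Mathlib

open PowerSeries in
theorem aux_geom {R : Type*} [CommRing R] (w : R) (n N : ℕ) :
    (1 - w) * ∑ k ∈ Finset.range N, (Nat.choose (n+1+k) (n+1) : R) * w ^ k
      = ∑ k ∈ Finset.range N, (Nat.choose (n+k) n : R) * w ^ k - (Nat.choose (n+N) (n+1) : R) * w ^ N := by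
  induction N with
  | zero => simp
  | succ N ih =>
    rw [Finset.sum_range_succ, Finset.sum_range_succ, mul_add, ih]
    have h : (Nat.choose (n+1+N) (n+1) : R) = Nat.choose (n+N) n + Nat.choose (n+N) (n+1) := by
      rw [show n+1+N = (n+N)+1 by ring, Nat.choose_succ_succ]; push_cast; ring
    rw [show n + (N+1) = n+1+N by ring, h]
    ring

theorem aux_geom2 {R : Type*} [CommRing R] (w : R) (n N : ℕ) :
    ∃ Q : R, (1 - w) ^ (n+1) * ∑ k ∈ Finset.range N, (Nat.choose (n+k) n : R) * w ^ k
      = 1 - w ^ N * Q := by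
  induction n with
  | zero =>
    refine ⟨1, ?_⟩
    have := mul_neg_geom_sum w N
    simpa using this
  | succ n ih =>
    obtain ⟨Q, hQ⟩ := ih
    refine ⟨Q + (1 - w)^(n+1) * (Nat.choose (n+N) (n+1) : R), ?_⟩
    rw [pow_succ (1 - w) (n+1), mul_assoc, aux_geom, mul_sub, hQ]
    ring

open PowerSeries in
theorem aux_res (y v : PowerSeries ℚ) (hv : y * v = X) (hc : constantCoeff v = 1) (r : ℕ) :
    coeff r (v ^ (r+1) * derivative ℚ y) = if r = 0 then 1 else 0 := by
  have hd : derivative ℚ y * v + y * derivative ℚ v = 1 := by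
    have := congrArg (derivative ℚ) hv
    rw [Derivation.leibniz] at this
    simp only [smul_eq_mul, derivative_X] at this
    rw [← this]; ring
  rcases r with _ | r
  · have h0 : constantCoeff y = 0 := by
      have := congrArg constantCoeff hv
      simpa [hc] using this
    have := congrArg constantCoeff hd
    simp only [map_add, map_mul, h0, hc] at this
    simp only [coeff_zero_eq_constantCoeff, map_mul, map_pow, hc]
    simpa using this
  · have e : v ^ (r+1+1) * derivative ℚ y = v^(r+1) - X * (v^r * derivative ℚ v) := by
      rw [← hv]
      linear_combination v^(r+1) * hd
    have e2 : derivative ℚ (v^(r+1)) = ((r+1 : ℕ) : ℚ) • (v^r * derivative ℚ v) := by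
      rw [Derivation.leibniz_pow, Nat.cast_smul_eq_nsmul]; simp
    have e3 := congrArg (coeff r) e2
    rw [coeff_derivative, coeff_smul] at e3
    rw [e, map_sub, coeff_succ_X_mul]
    have : (r : ℚ) + 1 ≠ 0 := by positivity
    have e4 : coeff (r+1) (v^(r+1)) = coeff r (v^r * derivative ℚ v) := by
      apply mul_right_cancel₀ this
      rw [e3]; push_cast; simp [mul_comm]
    simp [e4]

open PowerSeries in
theorem aux_res2 (y v : PowerSeries ℚ) (hv : y * v = X) (hc : constantCoeff v = 1) (n j : ℕ) :
    coeff n (v ^ (n+1) * y ^ j * derivative ℚ y) = if j = n then 1 else 0 := by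
  have hy : X ∣ y := by
    rw [X_dvd_iff]
    have := congrArg constantCoeff hv
    simpa [hc] using this
  by_cases h : j ≤ n
  · obtain ⟨r, rfl⟩ := Nat.exists_eq_add_of_le h
    have : v ^ (j+r+1) * y ^ j * derivative ℚ y = X ^ j * (v ^ (r+1) * derivative ℚ y) := by
      rw [← hv]; ring
    rw [this, add_comm j r, coeff_X_pow_mul, aux_res y v hv hc]
    simp
  · rw [if_neg (by omega)]
    have h2 : X ^ j ∣ v ^ (n+1) * y ^ j * derivative ℚ y :=
      Dvd.dvd.mul_right (Dvd.dvd.mul_left (pow_dvd_pow_of_dvd hy j) _) _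
    exact X_pow_dvd_iff.mp h2 n (by omega)

open PowerSeries in
theorem aux_main (y : PowerSeries ℚ) (h0 : constantCoeff y = 0)
    (heq : y * (1 - (2 * y^2 - y^8)) = X) (n : ℕ) :
    coeff (n+1) y * (n+1) = ∑ k ∈ Finset.range (n+1), ∑ i ∈ Finset.range (k+1),
      if 2 * k + 6 * i = n then
        (Nat.choose (n+k) n : ℚ) * ((-1)^i * 2^(k-i) * (Nat.choose k i : ℚ)) else 0 := by
  set v := 1 - (2 * y^2 - y^8) with hvd
  have hc : constantCoeff v = 1 := by simp [hvd, h0]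
  obtain ⟨Q, hQ⟩ := aux_geom2 (2 * y^2 - y^8) n (n+1)
  rw [← hvd] at hQ
  have hy : X ∣ y := X_dvd_iff.mpr h0
  have hz : coeff n ((2 * y^2 - y^8)^(n+1) * Q * derivative ℚ y) = 0 := by
    have h1 : X ∣ 2 * y^2 - y^8 := by
      rw [X_dvd_iff]; simp [h0]
    have h2 : X ^ (n+1) ∣ (2 * y^2 - y^8)^(n+1) * Q * derivative ℚ y :=
      Dvd.dvd.mul_right (Dvd.dvd.mul_right (pow_dvd_pow_of_dvd h1 _) _) _
    exact X_pow_dvd_iff.mp h2 n (by omega)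
  rw [← coeff_derivative]
  have e : derivative ℚ y = (v ^ (n+1) * ∑ k ∈ Finset.range (n+1), (Nat.choose (n+k) n : PowerSeries ℚ) * (2 * y^2 - y^8) ^ k) * derivative ℚ y
     + (2 * y^2 - y^8)^(n+1) * Q * derivative ℚ y := by
    rw [hQ]; ring
  rw [e, map_add, hz, add_zero, Finset.mul_sum, Finset.sum_mul, map_sum]
  refine Finset.sum_congr rfl fun k _ => ?_
  have e2 : (2 * y^2 - y^8)^k = ∑ i ∈ Finset.range (k+1),
      C (((-1)^i * 2^(k-i) * (Nat.choose k i : ℚ))) * y ^ (2*k+6*i) := by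
    rw [show 2 * y^2 - y^8 = (-y^8) + 2 * y^2 by ring, add_pow]
    refine Finset.sum_congr rfl fun i hi => ?_
    obtain ⟨s, rfl⟩ := Nat.exists_eq_add_of_le (Nat.lt_succ_iff.mp (Finset.mem_range.mp hi))
    have : (C (2:ℚ)) = (2 : PowerSeries ℚ) := map_ofNat C 2
    simp only [map_mul, map_pow, map_neg, map_one, map_natCast, this, Nat.add_sub_cancel_left]
    rw [neg_pow]
    ring
  rw [e2, Finset.mul_sum, Finset.mul_sum, Finset.sum_mul, map_sum]
  refine Finset.sum_congr rfl fun i _ => ?_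
  have e3 : v ^ (n+1) * ((Nat.choose (n+k) n : PowerSeries ℚ) * (C (((-1)^i * 2^(k-i) * (Nat.choose k i : ℚ))) * y ^ (2*k+6*i))) * derivative ℚ y
     = C ((Nat.choose (n+k) n : ℚ) * ((-1)^i * 2^(k-i) * (Nat.choose k i : ℚ))) * (v ^ (n+1) * y ^ (2*k+6*i) * derivative ℚ y) := by
    rw [map_mul C (Nat.choose (n+k) n : ℚ), map_natCast]; ring
  rw [e3, coeff_C_mul, aux_res2 y v heq hc]
  simp

theorem aux_term (m i : ℕ) (h : 4 * i ≤ m) :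
    (Nat.choose (2*m+(m-3*i)) (2*m) : ℚ) * ((-1)^i * 2^(m-3*i-i) * (Nat.choose (m-3*i) i : ℚ))
    = ((Nat.factorial (3 * (m - i)) : ℚ) /
                ((Nat.factorial (2*m) : ℚ) * (Nat.factorial (m - 4 * i) : ℚ) *
                  (Nat.factorial i : ℚ))) *
              (-1 : ℚ) ^ i * (2 : ℚ) ^ (m - 4 * i) := by
  rw [Nat.cast_choose ℚ (by omega : 2*m ≤ 2*m+(m-3*i)), Nat.cast_choose ℚ (by omega : i ≤ m-3*i)]
  rw [show m-3*i-i = m-4*i by omega, show 2*m+(m-3*i) - 2*m = m-3*i by omega,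
    show 2*m+(m-3*i) = 3*(m-i) by omega]
  have := fun a : ℕ => (Nat.cast_ne_zero (R := ℚ)).mpr (Nat.factorial_ne_zero a)
  have h1 := this (2*m)
  have h2 := this (m-3*i)
  have h3 := this i
  have h4 := this (m-4*i)
  field_simp

theorem statement_4
    (y : PowerSeries ℚ)
    (h0 : PowerSeries.constantCoeff y = 0)
    (heq : ∑ k ∈ Finset.range (2 + 1),
        (-1 : PowerSeries ℚ) ^ k * (Nat.choose 2 k : PowerSeries ℚ) * y ^ 3 ^ k
        = PowerSeries.X)
    (n : ℕ) (hn : 1 ≤ n) :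
    (Odd n →
      PowerSeries.coeff n y =
        (1 / (n : ℚ)) *
          ∑ i ∈ Finset.range ((n - 1) / 8 + 1),
            ((Nat.factorial (3 * ((n - 1) / 2 - i)) : ℚ) /
                ((Nat.factorial (n - 1) : ℚ) * (Nat.factorial ((n - 1) / 2 - 4 * i) : ℚ) *
                  (Nat.factorial i : ℚ))) *
              (-1 : ℚ) ^ i * (2 : ℚ) ^ ((n - 1) / 2 - 4 * i)) ∧
    (Even n → PowerSeries.coeff n y = 0) := by
  have heq' : y * (1 - (2 * y^2 - y^8)) = PowerSeries.X := by
    rw [← heq]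
    simp [Finset.sum_range_succ]
    ring
  obtain ⟨n, rfl⟩ : ∃ k, n = k + 1 := ⟨n - 1, by omega⟩
  have key := aux_main y h0 heq' n
  have hne : (n : ℚ) + 1 ≠ 0 := by positivity
  constructor
  · rintro ⟨m, hm⟩
    obtain rfl : n = 2 * m := by omega
    rw [one_div, eq_inv_mul_iff_mul_eq₀ (by push_cast at hne ⊢; exact hne), mul_comm]
    push_cast at key ⊢
    rw [key, Finset.sum_sigma']
    rw [← Finset.sum_filter]
    symm
    refine Finset.sum_bij (fun i _ => ⟨m - 3 * i, i⟩) ?_ ?_ ?_ ?_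
    · intro i hi
      simp only [Finset.mem_range, Finset.mem_filter, Finset.mem_sigma] at hi ⊢
      omega
    · intro i _ j _ h
      simp only [Sigma.mk.injEq] at h
      exact eq_of_heq h.2
    · rintro ⟨k, i⟩ h
      simp only [Finset.mem_range, Finset.mem_filter, Finset.mem_sigma] at h
      refine ⟨i, by simp only [Finset.mem_range]; omega, ?_⟩
      rw [show m - 3 * i = k by omega]
    · intro i hi
      simp only [Finset.mem_range] at hi
      rw [show 2 * m / 2 = m by omega]
      exact (aux_term m i (by omega)).symm
  · rintro ⟨m, hm⟩
    have : PowerSeries.coeff (n+1) y * ((n:ℚ)+1) = 0 := by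
      rw [key]
      refine Finset.sum_eq_zero fun k _ => Finset.sum_eq_zero fun i _ => ?_
      rw [if_neg (by omega)]
    exact (mul_eq_zero.mp this).resolve_right hne
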